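/- There exist absolute constants r₀, C₀, c and n₀ such that the following holds. Let n ≥ n₀, k ≥ 3, r ≥ r₀, ℓ ≥ 2, set D := rk, and assume Dℓ < 0.3·log n / log log n. Let δ ∈ (0,1] with δ²·n^{0.1} ≥ c·log n, and let m be an integer with binom(n,k) ≥ m ≥ (4·ℓ^k·k^{k/2+1} / (k!·2^{k/2})) · n^{k/2} / (δ²·D^{k/2−1}); set p := m / binom(n,k). Then there exists a randomized estimator x̂, i.e., a measurable function of z ∈ {0,±1}^{binom([n],k)} and of internal randomness independent of z, such that for every x ∈ {±1}^n: if k is odd, Pr_{z∼P_x}[x̂(z) = x] ≥ 1 − C₀·ℓ^{−kD}, and if k is even, Pr_{z∼P_x}[x̂(z) ∈ {x, −x}] ≥ 1 − C₀·ℓ^{−kD}. -/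

import Mathlib

open Finset

/-- The index set of `k`-element subsets of `[n]`, used to index the coordinates of an
observation `z ∈ {0,±1}^{binom([n],k)}`. -/
abbrev KSet (n k : ℕ) := {α : Finset (Fin n) // α.card = k}

/-- Coordinate weights under the null model `Q`: value `0` with probability `1−p`,
values `+1` and `−1` each with probability `p/2`. -/
noncomputable def qWeight (p : ℝ) : Fin 3 → ℝ := ![1 - p, p / 2, p / 2]

/-- Coordinate weights under the planted model `P_x`: the coordinate is `0` with probability
`1−p`, equals `x_α` with probability `p(1+δ)/2` and `−x_α` with probability `p(1−δ)/2`. -/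
noncomputable def pWeight (p δ : ℝ) : Fin 3 → ℝ := ![1 - p, p * (1 + δ) / 2, p * (1 - δ) / 2]

/-- Realized coordinate values under the null model. -/
noncomputable def qVal : Fin 3 → ℝ := ![0, 1, -1]

/-- Realized coordinate values under the planted model: `0`, `x_α`, `−x_α`,
where `x_α = ∏_{i∈α} x_i`. -/
noncomputable def pVal {n k : ℕ} (x : Fin n → ℝ) (α : KSet n k) : Fin 3 → ℝ :=
  ![0, ∏ i ∈ α.1, x i, -∏ i ∈ α.1, x i]

/-- Expectation of a statistic `F` of the observation `z` under the null (Bernoulli) model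
`Q`, in which the coordinates `z(α)` are independent with law given by `qWeight p`. -/
noncomputable def expQ (n k : ℕ) (p : ℝ) (F : (KSet n k → ℝ) → ℝ) : ℝ :=
  ∑ ω : KSet n k → Fin 3, (∏ α : KSet n k, qWeight p (ω α)) * F (fun α => qVal (ω α))

/-- Expectation of a statistic `F` of the observation `z` under the planted Bernoulli model
`P_x`, in which the coordinates `z(α) = b_α x_α ξ_α` are independent. -/
noncomputable def expP (n k : ℕ) (p δ : ℝ) (x : Fin n → ℝ) (F : (KSet n k → ℝ) → ℝ) : ℝ :=
  ∑ ω : KSet n k → Fin 3, (∏ α : KSet n k, pWeight p δ (ω α)) * F (fun α => pVal x α (ω α))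

/-!
The estimator maximizes the correlation `∑_α z(α) y_α` over sign vectors `y`. It can miss `x` only
if some flip of `x` on a set `B` correlates with `z` at least as well as `x`. The flip changes the
sign of `y_α` exactly for those `α` that meet `B` in an odd number of points; their proportion is
at least `min(|B|, n - |B|) / (2n)`, as one sees by swapping a point of `B` with a point outside
it, and it is `1` if `B = [n]` and `k` is odd. Each such `α` contributes a factor
`exp(-p δ² / 4)` to the exponential moment of the gain in correlation, so the union bound over `B`
gives an error probability of order `n exp(-m δ² / (8n))`. Since `k ≥ 3`, the prescribed `m` makes
`m δ² / (8n)` at least `log n + k D log ℓ`.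
-/

section OddMeeting

variable {ι : Type*} [Fintype ι] [DecidableEq ι]

/-- The `k`-element subsets of `ι` meeting `B` in an odd number of points. For `x ∈ {±1}^ι` these
are the `α` whose monomial `x_α` changes sign when `x` is flipped on `B`. -/
def oddMeeting (k : ℕ) (B : Finset ι) : Finset (Finset ι) :=
  {α ∈ powersetCard k univ | Odd #(α ∩ B)}

lemma oddMeeting_univ {k : ℕ} (hk : Odd k) :
    oddMeeting k (univ : Finset ι) = powersetCard k univ :=
  filter_true_of_mem fun α hα => by rwa [inter_univ, mem_powersetCard_univ.1 hα]

-- Of `insert i β` and `insert j β`, exactly one meets `B` in an odd number of points.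
lemma choose_le_card_filter_oddMeeting {B : Finset ι} {i j : ι} (hi : i ∈ B) (hj : j ∉ B)
    (k : ℕ) :
    (Fintype.card ι - 2).choose k ≤ #{α ∈ oddMeeting (k + 1) B | i ∈ α ↔ j ∉ α} := by
  have hij : i ≠ j := fun h => hj (h ▸ hi)
  have hcard : #(powersetCard k ({i, j}ᶜ : Finset ι)) = (Fintype.card ι - 2).choose k := by
    rw [card_powersetCard, card_compl, card_pair hij]
  rw [← hcard]
  refine card_le_card_of_injOn (fun β => if Odd #(β ∩ B) then insert j β else insert i β)
    (fun β hβ => ?_) (Set.LeftInvOn.injOn (f₁' := fun α => α \ {i, j}) fun β hβ => ?_)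
  all_goals
    obtain ⟨hsub, hβk⟩ := mem_powersetCard.1 hβ
    have hiβ : i ∉ β := fun h => by simpa using hsub h
    have hjβ : j ∉ β := fun h => by simpa using hsub h
  · simp only [oddMeeting, mem_coe, mem_filter, mem_powersetCard_univ]
    split_ifs with hodd
    · simp [hβk, hodd, hiβ, hjβ, hij, insert_inter_of_notMem hj]
    · simp [hβk, hiβ, hjβ, hij.symm, insert_inter_of_mem hi, Nat.not_odd_iff_even.1 hodd]
  · have hdisj : Disjoint β {i, j} := by simp [hiβ, hjβ]
    dsimp only
    split_ifs <;> simp [insert_sdiff_of_mem, hdisj.sdiff_eq_left]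

-- Put the point of the pair that lies in `α` first; membership in `B` recovers the pair.
lemma card_filter_separated_pairs_le (B α : Finset ι) :
    #{q ∈ B ×ˢ Bᶜ | q.1 ∈ α ↔ q.2 ∉ α} ≤ #α * #αᶜ := by
  rw [← card_product]
  refine card_le_card_of_injOn (fun q => if q.1 ∈ α then q else q.swap) ?_
    (Set.LeftInvOn.injOn (f₁' := fun q => if q.1 ∈ B then q else q.swap) ?_)
  all_goals
    rintro ⟨i, j⟩ hq
    simp only [mem_coe, mem_filter, mem_product, mem_compl] at hq
    obtain ⟨⟨hi, hj⟩, hsep⟩ := hq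
    by_cases hiα : i ∈ α
  · simpa [hiα] using hsep.1 hiα
  · simpa [hiα] using mt hsep.2 hiα
  · simp [hiα, hi]
  · simp [hiα, hj]

lemma card_mul_card_compl_mul_choose_le (k : ℕ) (B : Finset ι) :
    #B * #Bᶜ * (Fintype.card ι - 2).choose k ≤
      #(oddMeeting (k + 1) B) * ((k + 1) * (Fintype.card ι - (k + 1))) := by
  rw [← card_product]
  refine card_mul_le_card_mul (fun q α => q.1 ∈ α ↔ q.2 ∉ α) (fun q hq => ?_) (fun α hα => ?_)
  · obtain ⟨hi, hj⟩ := mem_product.1 hq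
    exact choose_le_card_filter_oddMeeting hi (mem_compl.1 hj) k
  · have hαk : #α = k + 1 := mem_powersetCard_univ.1 (mem_filter.1 hα).1
    simpa [bipartiteBelow, card_compl, hαk] using card_filter_separated_pairs_le B α

lemma add_two_mul_add_one_mul_choose (n k : ℕ) :
    (n + 2) * (n + 1) * n.choose k = (n + 2).choose (k + 1) * ((k + 1) * (n + 1 - k)) := by
  calc (n + 2) * (n + 1) * n.choose k = (n + 2) * (n.choose k * (n + 1)) := by ring
    _ = (n + 2) * (n + 1).choose k * (n + 1 - k) := by rw [Nat.choose_mul_succ_eq, mul_assoc]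
    _ = _ := by rw [Nat.add_one_mul_choose_eq, mul_assoc]

lemma choose_mul_card_mul_card_compl_le {k : ℕ} (hk : 1 ≤ k) (hkn : k < Fintype.card ι)
    (B : Finset ι) :
    (Fintype.card ι).choose k * (#B * #Bᶜ) ≤
      #(oddMeeting k B) * (Fintype.card ι * (Fintype.card ι - 1)) := by
  obtain ⟨k, rfl⟩ := Nat.exists_eq_add_of_le' hk
  obtain ⟨n, hn⟩ := Nat.exists_eq_add_of_le' (show 2 ≤ Fintype.card ι by omega)
  have hcount := card_mul_card_compl_mul_choose_le k B
  simp only [hn, Nat.add_sub_cancel, show n + 2 - 1 = n + 1 from rfl,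
    show n + 2 - (k + 1) = n + 1 - k by omega] at hcount ⊢
  refine Nat.le_of_mul_le_mul_right ?_ (show 0 < (k + 1) * (n + 1 - k) by
    exact Nat.mul_pos k.succ_pos (by omega))
  calc (n + 2).choose (k + 1) * (#B * #Bᶜ) * ((k + 1) * (n + 1 - k))
      = (n + 2) * (n + 1) * (#B * #Bᶜ * n.choose k) := by
        rw [mul_right_comm, ← add_two_mul_add_one_mul_choose]; ring
    _ ≤ (n + 2) * (n + 1) * (#(oddMeeting (k + 1) B) * ((k + 1) * (n + 1 - k))) := by gcongr
    _ = _ := by ring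

lemma choose_mul_min_card_le {k : ℕ} (hk : 1 ≤ k) (hkn : k < Fintype.card ι) (B : Finset ι) :
    (Fintype.card ι).choose k * min #B #Bᶜ ≤ 2 * Fintype.card ι * #(oddMeeting k B) := by
  have hpairs := choose_mul_card_mul_card_compl_le hk hkn B
  have hhalf : min #B #Bᶜ * Fintype.card ι ≤ 2 * (#B * #Bᶜ) := by
    rw [← card_add_card_compl B]
    rcases le_total #B #Bᶜ with h | h
    · rw [min_eq_left h]; nlinarith
    · rw [min_eq_right h]; nlinarith
  refine Nat.le_of_mul_le_mul_right ?_ (show 0 < Fintype.card ι by omega)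
  calc (Fintype.card ι).choose k * min #B #Bᶜ * Fintype.card ι
      ≤ 2 * ((Fintype.card ι).choose k * (#B * #Bᶜ)) := by
        rw [mul_assoc, mul_left_comm 2]; gcongr
    _ ≤ 2 * (#(oddMeeting k B) * (Fintype.card ι * Fintype.card ι)) := by
        refine Nat.mul_le_mul_left 2 (hpairs.trans ?_)
        gcongr
        exact Nat.sub_le _ _
    _ = _ := by ring

lemma exists_nonempty_choose_mul_card_le {k : ℕ} (hk : 1 ≤ k) (hkn : k < Fintype.card ι)
    {B : Finset ι} (hB : B ≠ ∅) (hB' : B = univ → Odd k) :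
    ∃ A : Finset ι, (A = B ∨ A = Bᶜ) ∧ A.Nonempty ∧
      (Fintype.card ι).choose k * #A ≤ 2 * Fintype.card ι * #(oddMeeting k B) := by
  by_cases hu : B = univ
  · refine ⟨B, .inl rfl, nonempty_iff_ne_empty.2 hB, ?_⟩
    rw [hu, oddMeeting_univ (hB' hu), card_powersetCard, card_univ]
    nlinarith
  · have hmin := choose_mul_min_card_le hk hkn B
    rcases le_total #B #Bᶜ with h | h
    · exact ⟨B, .inl rfl, nonempty_iff_ne_empty.2 hB, by rwa [min_eq_left h] at hmin⟩
    · refine ⟨Bᶜ, .inr rfl, nonempty_iff_ne_empty.2 ?_, by rwa [min_eq_right h] at hmin⟩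
      rwa [Ne, compl_eq_empty_iff]

end OddMeeting

section UnionBound

variable {ι : Type*} [Fintype ι] {q : ℝ}

lemma sum_nonempty_pow_card (q : ℝ) :
    ∑ A : Finset ι with A.Nonempty, q ^ #A = (1 + q) ^ Fintype.card ι - 1 := by
  classical
  have hall : ∑ A : Finset ι, q ^ #A = (1 + q) ^ Fintype.card ι := by
    simpa [add_comm] using Fintype.sum_pow_mul_eq_add_pow ι q 1
  have hsplit := sum_filter_add_sum_filter_not univ (fun A : Finset ι => A.Nonempty) (q ^ #·)
  have hempty : ({A | ¬A.Nonempty} : Finset (Finset ι)) = {∅} := by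
    ext A; simp [not_nonempty_iff_eq_empty]
  rw [hall, hempty, sum_singleton, card_empty, pow_zero] at hsplit
  linarith

lemma sum_le_of_forall_exists_self_or_compl [DecidableEq ι] (hq : 0 ≤ q)
    {s : Finset (Finset ι)} {ε : Finset ι → ℝ}
    (h : ∀ B ∈ s, ∃ A, (A = B ∨ A = Bᶜ) ∧ A.Nonempty ∧ ε B ≤ q ^ #A) :
    ∑ B ∈ s, ε B ≤ 2 * ((1 + q) ^ Fintype.card ι - 1) := by
  set g : Finset ι → ℝ := fun A => if A.Nonempty then q ^ #A else 0
  have hg0 : ∀ A, 0 ≤ g A := fun A => by positivity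
  have hpt : ∀ B ∈ s, ε B ≤ g B + g Bᶜ := by
    intro B hB
    obtain ⟨A, rfl | rfl, hA, hε⟩ := h B hB
    · exact (hε.trans_eq (if_pos hA).symm).trans (le_add_of_nonneg_right (hg0 _))
    · exact (hε.trans_eq (if_pos hA).symm).trans (le_add_of_nonneg_left (hg0 _))
  calc ∑ B ∈ s, ε B ≤ ∑ B ∈ s, (g B + g Bᶜ) := sum_le_sum hpt
    _ ≤ ∑ B, (g B + g Bᶜ) := sum_le_univ_sum_of_nonneg fun B => add_nonneg (hg0 _) (hg0 _)
    _ = 2 * ∑ A, g A := by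
        rw [sum_add_distrib, compl_involutive.bijective.sum_comp g, two_mul]
    _ = _ := by rw [← sum_nonempty_pow_card q, sum_filter]

lemma one_add_pow_sub_one_le {n : ℕ} (hq : 0 ≤ q) (hnq : n * q ≤ 1) :
    (1 + q) ^ n - 1 ≤ 2 * (n * q) := by
  have hnq0 : 0 ≤ n * q := by positivity
  have hpow : (1 + q) ^ n ≤ Real.exp (n * q) := by
    rw [Real.exp_nat_mul]
    gcongr
    linarith [Real.add_one_le_exp q]
  have hexp := Real.abs_exp_sub_one_le (x := n * q) (by rwa [abs_of_nonneg hnq0])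
  rw [abs_of_nonneg hnq0] at hexp
  linarith [le_of_abs_le hexp]

end UnionBound

section SignVector

/-- Membership in the hypercube `{±1}^ι`. -/
def IsSignVector {ι : Type*} (x : ι → ℝ) : Prop :=
  ∀ i, x i = 1 ∨ x i = -1

variable {ι : Type*} {x y : ι → ℝ}

lemma IsSignVector.prod_mul_prod (hx : IsSignVector x) (α : Finset ι) :
    (∏ i ∈ α, x i) * ∏ i ∈ α, x i = 1 := by
  rw [← prod_mul_distrib]
  exact prod_eq_one fun i _ => mul_self_eq_one_iff.2 (hx i)

lemma prod_piecewise_neg [DecidableEq ι] (x : ι → ℝ) (α B : Finset ι) :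
    ∏ i ∈ α, B.piecewise (-x) x i = (-1) ^ #(α ∩ B) * ∏ i ∈ α, x i := by
  simp only [prod_piecewise, Pi.neg_apply, prod_neg, mul_assoc, prod_inter_mul_prod_sdiff]

lemma IsSignVector.exists_eq_piecewise_neg [Finite ι] [DecidableEq ι] (hx : IsSignVector x)
    (hy : IsSignVector y) : ∃ B : Finset ι, y = B.piecewise (-x) x := by
  have := Fintype.ofFinite ι
  refine ⟨({i | y i ≠ x i} : Finset ι), funext fun i => ?_⟩
  by_cases h : y i = x i
  · simp [h]
  · rcases hx i with hxi | hxi <;> rcases hy i with hyi | hyi <;> simp_all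

end SignVector

section PlantedExpectation

variable {n k : ℕ} {p δ : ℝ} {x : Fin n → ℝ}

lemma pWeight_nonneg (hp0 : 0 ≤ p) (hp1 : p ≤ 1) (hδ : |δ| ≤ 1) (j : Fin 3) :
    0 ≤ pWeight p δ j := by
  obtain ⟨hδl, hδu⟩ := abs_le.1 hδ
  have hplus : 0 ≤ p * (1 + δ) / 2 := by have := neg_le_iff_add_nonneg'.1 hδl; positivity
  have hminus : 0 ≤ p * (1 - δ) / 2 := by have := sub_nonneg.2 hδu; positivity
  fin_cases j <;> simpa [pWeight]

lemma sum_pWeight (p δ : ℝ) : ∑ j, pWeight p δ j = 1 := by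
  simp only [Fin.sum_univ_three, pWeight, Matrix.cons_val]
  ring

lemma expP_mono (hp0 : 0 ≤ p) (hp1 : p ≤ 1) (hδ : |δ| ≤ 1) {F G : (KSet n k → ℝ) → ℝ}
    (h : ∀ z, F z ≤ G z) : expP n k p δ x F ≤ expP n k p δ x G :=
  sum_le_sum fun _ _ => mul_le_mul_of_nonneg_left (h _)
    (prod_nonneg fun _ _ => pWeight_nonneg hp0 hp1 hδ _)

lemma expP_prod (f : KSet n k → ℝ → ℝ) :
    expP n k p δ x (fun z => ∏ α, f α (z α)) =
      ∏ α, ∑ j, pWeight p δ j * f α (pVal x α j) := by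
  simp only [expP, prod_univ_sum, Fintype.piFinset_univ, prod_mul_distrib]

lemma expP_one : expP n k p δ x (fun _ => 1) = 1 := by
  simpa [sum_pWeight] using expP_prod (p := p) (δ := δ) (x := x) fun (_ : KSet n k) _ => 1

lemma expP_add_sum {κ : Type*} (G : (KSet n k → ℝ) → ℝ) (s : Finset κ)
    (F : κ → (KSet n k → ℝ) → ℝ) :
    expP n k p δ x (fun z => G z + ∑ b ∈ s, F b z) =
      expP n k p δ x G + ∑ b ∈ s, expP n k p δ x (F b) := by
  simp only [expP, mul_add, sum_add_distrib, mul_sum]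
  rw [sum_comm (s := s)]

lemma one_sub_sum_expP_le {κ : Type*} (hp0 : 0 ≤ p) (hp1 : p ≤ 1) (hδ : |δ| ≤ 1)
    {G : (KSet n k → ℝ) → ℝ} {s : Finset κ} {F : κ → (KSet n k → ℝ) → ℝ}
    (h : ∀ z, 1 ≤ G z + ∑ b ∈ s, F b z) :
    1 - ∑ b ∈ s, expP n k p δ x (F b) ≤ expP n k p δ x G := by
  rw [sub_le_iff_le_add, ← expP_add_sum, ← expP_one (n := n) (k := k) (p := p) (δ := δ) (x := x)]
  exact expP_mono hp0 hp1 hδ h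

end PlantedExpectation

section Chernoff

variable {n k : ℕ} {p δ : ℝ} {x : Fin n → ℝ}

/-- The correlation `⟨z, y^{⊗k}⟩ = ∑_α z(α) y_α` of an observation with a candidate `y`, which for
`0 < δ < 1` and `y ∈ {±1}^n` is an increasing function of the likelihood of `y`. -/
noncomputable def corr (z : KSet n k → ℝ) (y : Fin n → ℝ) : ℝ :=
  ∑ α : KSet n k, z α * ∏ i ∈ α.1, y i

lemma corr_piecewise_neg_sub_corr (z : KSet n k → ℝ) (x : Fin n → ℝ) (B : Finset (Fin n)) :
    corr z (B.piecewise (-x) x) - corr z x =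
      ∑ α : KSet n k, if Odd #(α.1 ∩ B) then -2 * (z α * ∏ i ∈ α.1, x i) else 0 := by
  rw [corr, corr, ← sum_sub_distrib]
  refine sum_congr rfl fun α _ => ?_
  rw [prod_piecewise_neg]
  split_ifs with hodd
  · rw [hodd.neg_one_pow]; ring
  · rw [(Nat.not_odd_iff_even.1 hodd).neg_one_pow]; ring

lemma exp_le_one_add_add_sq {t : ℝ} (ht : |t| ≤ 1) : Real.exp t ≤ 1 + t + t ^ 2 := by
  linarith [le_of_abs_le (Real.abs_exp_sub_one_sub_id_le ht)]

/-- The tilt `-δ / 2` makes the linear term `-p δ² / 2` of the moment generating function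
outweigh the quadratic one `p δ² / 4`. -/
lemma sum_pWeight_mul_exp_le (hp0 : 0 ≤ p) (hp1 : p ≤ 1) (hδ : |δ| ≤ 1) (hx : IsSignVector x)
    (α : KSet n k) :
    ∑ j, pWeight p δ j * Real.exp (-(δ / 2) * (pVal x α j * ∏ i ∈ α.1, x i)) ≤
      Real.exp (-(p * δ ^ 2 / 4)) := by
  have hsmall : ∀ j, |-(δ / 2) * (pVal x α j * ∏ i ∈ α.1, x i)| ≤ 1 := by
    have hhalf : |δ / 2| ≤ 1 := by rw [abs_div, abs_two]; linarith
    intro j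
    fin_cases j <;> simp [pVal, hx.prod_mul_prod, hhalf]
  calc ∑ j, pWeight p δ j * Real.exp (-(δ / 2) * (pVal x α j * ∏ i ∈ α.1, x i))
      ≤ ∑ j, pWeight p δ j * (1 + -(δ / 2) * (pVal x α j * ∏ i ∈ α.1, x i) +
          (-(δ / 2) * (pVal x α j * ∏ i ∈ α.1, x i)) ^ 2) :=
        sum_le_sum fun j _ => mul_le_mul_of_nonneg_left (exp_le_one_add_add_sq (hsmall j))
          (pWeight_nonneg hp0 hp1 hδ j)
    _ = -(p * δ ^ 2 / 4) + 1 := by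
        simp only [Fin.sum_univ_three, pWeight, pVal, Matrix.cons_val, neg_mul (∏ i ∈ α.1, x i),
          hx.prod_mul_prod]
        ring
    _ ≤ _ := Real.add_one_le_exp _

lemma expP_exp_corr_le (hp0 : 0 ≤ p) (hp1 : p ≤ 1) (hδ : |δ| ≤ 1) (hx : IsSignVector x)
    (B : Finset (Fin n)) :
    expP n k p δ x (fun z => Real.exp (δ / 4 * (corr z (B.piecewise (-x) x) - corr z x))) ≤
      Real.exp (-(p * δ ^ 2 / 4)) ^ #(oddMeeting k B) := by
  have hfactor : ∀ z : KSet n k → ℝ,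
      Real.exp (δ / 4 * (corr z (B.piecewise (-x) x) - corr z x)) = ∏ α : KSet n k,
        if Odd #(α.1 ∩ B) then Real.exp (-(δ / 2) * (z α * ∏ i ∈ α.1, x i)) else 1 := by
    intro z
    rw [corr_piecewise_neg_sub_corr, mul_sum, Real.exp_sum]
    refine prod_congr rfl fun α _ => ?_
    split_ifs
    · ring_nf
    · simp
  have hcount : Real.exp (-(p * δ ^ 2 / 4)) ^ #(oddMeeting k B) = ∏ α : KSet n k,
      if Odd #(α.1 ∩ B) then Real.exp (-(p * δ ^ 2 / 4)) else 1 := by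
    rw [← prod_const, oddMeeting, prod_filter]
    exact prod_subtype _ (fun _ => mem_powersetCard_univ) _
  simp only [hfactor]
  rw [hcount, expP_prod fun α t =>
    if Odd #(α.1 ∩ B) then Real.exp (-(δ / 2) * (t * ∏ i ∈ α.1, x i)) else 1]
  refine prod_le_prod (fun α _ => sum_nonneg fun j _ => mul_nonneg
    (pWeight_nonneg hp0 hp1 hδ j) (by positivity)) fun α _ => ?_
  split_ifs
  · exact sum_pWeight_mul_exp_le hp0 hp1 hδ hx α
  · simp [sum_pWeight]

end Chernoff

section MaximumCorrelation

variable {n k : ℕ} {p δ : ℝ} {x : Fin n → ℝ}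

lemma exists_isSignVector_forall_corr_le (z : KSet n k → ℝ) :
    ∃ v, IsSignVector v ∧ ∀ y, IsSignVector y → corr z y ≤ corr z v := by
  have hmem : ∀ y : Fin n → ℝ,
      y ∈ Fintype.piFinset (fun _ => ({1, -1} : Finset ℝ)) ↔ IsSignVector y := by
    simp [IsSignVector]
  obtain ⟨v, hv, hmax⟩ := exists_max_image _ (corr z) ⟨1, (hmem 1).2 fun _ => .inl rfl⟩
  exact ⟨v, (hmem v).1 hv, fun y hy => hmax y ((hmem y).2 hy)⟩

/-- The estimator: a sign vector maximizing the correlation with the observation `z`, hence a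
maximum likelihood estimator of the planted vector. Ties are broken arbitrarily; for even `k` there
are always ties, since `y` and `-y` have the same correlation. -/
noncomputable def corrArgmax (z : KSet n k → ℝ) : Fin n → ℝ :=
  (exists_isSignVector_forall_corr_le z).choose

lemma isSignVector_corrArgmax (z : KSet n k → ℝ) : IsSignVector (corrArgmax z) :=
  (exists_isSignVector_forall_corr_le z).choose_spec.1

lemma IsSignVector.corr_le_corr_corrArgmax (hx : IsSignVector x) (z : KSet n k → ℝ) :
    corr z x ≤ corr z (corrArgmax z) :=
  (exists_isSignVector_forall_corr_le z).choose_spec.2 x hx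

/-- The indicator that `y` is the planted vector `x`, up to sign when `k` is even. -/
noncomputable def recovers (k : ℕ) (x y : Fin n → ℝ) : ℝ :=
  if y = x ∨ Even k ∧ y = -x then 1 else 0

lemma recovers_nonneg (k : ℕ) (x y : Fin n → ℝ) : 0 ≤ recovers k x y := by
  unfold recovers
  positivity

/-- The flips whose outcome counts as an error of the estimator: all but the empty one and, for
even `k`, the global one. -/
def wrongFlips (n k : ℕ) : Finset (Finset (Fin n)) :=
  {B | B ≠ ∅ ∧ (B = univ → Odd k)}

lemma recovers_piecewise_neg {B : Finset (Fin n)} (hB : B ∉ wrongFlips n k) :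
    recovers k x (B.piecewise (-x) x) = 1 := by
  refine if_pos ?_
  rcases eq_or_ne B ∅ with rfl | hempty
  · exact .inl (piecewise_empty _ _)
  · obtain ⟨rfl, heven⟩ : B = univ ∧ Even k := by simpa [wrongFlips, hempty] using hB
    exact .inr ⟨heven, piecewise_univ _ _⟩

lemma one_le_recovers_add_sum (hδ : 0 ≤ δ) (hx : IsSignVector x) (z : KSet n k → ℝ) :
    1 ≤ recovers k x (corrArgmax z) +
      ∑ B ∈ wrongFlips n k, Real.exp (δ / 4 * (corr z (B.piecewise (-x) x) - corr z x)) := by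
  obtain ⟨B, hB⟩ := hx.exists_eq_piecewise_neg (isSignVector_corrArgmax z)
  by_cases hwrong : B ∈ wrongFlips n k
  · have hwins : 0 ≤ δ / 4 * (corr z (B.piecewise (-x) x) - corr z x) :=
      mul_nonneg (by positivity) (sub_nonneg.2 (hB ▸ hx.corr_le_corr_corrArgmax z))
    have hterm : ∀ B ∈ wrongFlips n k,
        0 ≤ Real.exp (δ / 4 * (corr z (B.piecewise (-x) x) - corr z x)) :=
      fun _ _ => Real.exp_nonneg _
    exact (Real.one_le_exp hwins).trans ((single_le_sum hterm hwrong).trans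
      (le_add_of_nonneg_left (recovers_nonneg k x _)))
  · rw [hB, recovers_piecewise_neg hwrong]
    exact le_add_of_nonneg_right (sum_nonneg fun _ _ => (Real.exp_pos _).le)

lemma exp_pow_card_oddMeeting_le (hn : 0 < n) (hp0 : 0 ≤ p) {A B : Finset (Fin n)}
    (hAB : n.choose k * #A ≤ 2 * n * #(oddMeeting k B)) :
    Real.exp (-(p * δ ^ 2 / 4)) ^ #(oddMeeting k B) ≤
      Real.exp (-(p * n.choose k * δ ^ 2 / (8 * n))) ^ #A := by
  have hAB' : (n.choose k : ℝ) * #A / (2 * n) ≤ #(oddMeeting k B) := by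
    rw [div_le_iff₀' (by positivity)]
    exact_mod_cast hAB
  rw [← Real.exp_nat_mul, ← Real.exp_nat_mul, Real.exp_le_exp, mul_neg, mul_neg, neg_le_neg_iff]
  calc (#A : ℝ) * (p * n.choose k * δ ^ 2 / (8 * n))
      = n.choose k * #A / (2 * n) * (p * δ ^ 2 / 4) := by ring
    _ ≤ #(oddMeeting k B) * (p * δ ^ 2 / 4) := by gcongr

theorem one_sub_le_expP_recovers_corrArgmax (hk : 1 ≤ k) (hkn : k < n) (hp0 : 0 ≤ p) (hp1 : p ≤ 1)
    (hδ0 : 0 ≤ δ) (hδ1 : δ ≤ 1) (hx : IsSignVector x) :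
    1 - 2 * ((1 + Real.exp (-(p * n.choose k * δ ^ 2 / (8 * n)))) ^ n - 1) ≤
      expP n k p δ x (fun z => recovers k x (corrArgmax z)) := by
  have hδ : |δ| ≤ 1 := by rwa [abs_of_nonneg hδ0]
  refine le_trans ?_ (one_sub_sum_expP_le hp0 hp1 hδ (one_le_recovers_add_sum hδ0 hx))
  refine sub_le_sub_left ?_ 1
  simpa using sum_le_of_forall_exists_self_or_compl (s := wrongFlips n k) (Real.exp_pos _).le
    fun B hB => by
    obtain ⟨hempty, huniv⟩ := (mem_filter_univ B).1 hB
    obtain ⟨A, hA, hA0, hcard⟩ :=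
      exists_nonempty_choose_mul_card_le hk (by simpa using hkn) hempty huniv
    rw [Fintype.card_fin] at hcard
    exact ⟨A, hA, hA0, (expP_exp_corr_le hp0 hp1 hδ hx B).trans
      (exp_pow_card_oddMeeting_le (by omega) hp0 hcard)⟩

end MaximumCorrelation

section SampleSize

open Filter

variable {n k D ℓ m : ℕ} {δ : ℝ}

/-- The sample size `(4 ℓ^k k^{k/2+1} / (k! 2^{k/2})) · n^{k/2} / (δ² D^{k/2-1})` required in the
recovery theorem. -/
noncomputable def sampleSize (n k D ℓ : ℕ) (δ : ℝ) : ℝ :=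
  4 * (ℓ : ℝ) ^ k * (k : ℝ) ^ ((k : ℝ) / 2 + 1) / ((k.factorial : ℝ) * (2 : ℝ) ^ ((k : ℝ) / 2))
    * (n : ℝ) ^ ((k : ℝ) / 2) / (δ ^ 2 * (D : ℝ) ^ ((k : ℝ) / 2 - 1))

lemma mul_rpow_le_sampleSize_mul_sq (hk : 1 ≤ k) (hD : 1 ≤ D) (hδ : δ ≠ 0) :
    4 * (k * D) * ((ℓ : ℝ) ^ 2 * n / (2 * (k * D))) ^ ((k : ℝ) / 2) ≤
      sampleSize n k D ℓ δ * δ ^ 2 := by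
  have hk0 : (0 : ℝ) < k := by positivity
  have hD0 : (0 : ℝ) < D := by positivity
  have hℓk : ((ℓ : ℝ) ^ 2) ^ ((k : ℝ) / 2) = (ℓ : ℝ) ^ k := by
    rw [← Real.rpow_natCast_mul ℓ.cast_nonneg, ← Real.rpow_natCast]
    congr 1
    push_cast
    ring
  have hfact : (k.factorial : ℝ) ≤ (k : ℝ) ^ ((k : ℝ) / 2) * (k : ℝ) ^ ((k : ℝ) / 2) := by
    rw [← Real.rpow_add hk0, add_halves, Real.rpow_natCast]
    exact_mod_cast k.factorial_le_pow
  have hDk : (D : ℝ) ^ ((k : ℝ) / 2) = D ^ ((k : ℝ) / 2 - 1) * D := by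
    rw [← Real.rpow_add_one hD0.ne', sub_add_cancel]
  calc 4 * (k * D) * ((ℓ : ℝ) ^ 2 * n / (2 * (k * D))) ^ ((k : ℝ) / 2)
      = 4 * ℓ ^ k * (k ^ ((k : ℝ) / 2) * k) / ((k ^ ((k : ℝ) / 2) * k ^ ((k : ℝ) / 2)) *
          2 ^ ((k : ℝ) / 2)) * n ^ ((k : ℝ) / 2) / D ^ ((k : ℝ) / 2 - 1) := by
        rw [Real.div_rpow (by positivity) (by positivity), Real.mul_rpow (by positivity)
          (by positivity), Real.mul_rpow (by positivity) (by positivity),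
          Real.mul_rpow (by positivity) (by positivity), hℓk, hDk]
        field_simp
    _ ≤ 4 * ℓ ^ k * (k ^ ((k : ℝ) / 2) * k) / (k.factorial * 2 ^ ((k : ℝ) / 2)) *
          n ^ ((k : ℝ) / 2) / D ^ ((k : ℝ) / 2 - 1) := by gcongr
    _ = sampleSize n k D ℓ δ * δ ^ 2 := by
        rw [sampleSize, Real.rpow_add_one hk0.ne']
        field_simp

/-- For `k ≥ 3` the sample size beats the `n log n` needed by the union bound, because `X y^{3/2}`
with `y = ℓ² n / (2 X)` and `X = k D` is of order `ℓ² n √y`, and `√y` is at least of order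
`n^{1/3}`. -/
lemma log_add_mul_log_le {t X a : ℝ} (ht : 0 < t) (hX : 0 < X) (hXt : 300 * X ≤ t) (ha : 1 ≤ a) :
    8 * t ^ 3 * (Real.log (t ^ 3) + X * Real.log a) ≤
      4 * X * (a ^ 2 * t ^ 3 / (2 * X)) ^ (3 / 2 : ℝ) := by
  have ha0 : 0 < a := by linarith
  set y := a ^ 2 * t ^ 3 / (2 * X) with hy
  have hy0 : 0 < y := by positivity
  have hsqrt : 12.2 * (a * t) ≤ √y := by
    refine Real.le_sqrt_of_sq_le ?_
    rw [hy, le_div_iff₀ (by positivity)]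
    calc (12.2 * (a * t)) ^ 2 * (2 * X) ≤ a ^ 2 * t ^ 2 * (300 * X) := by
          nlinarith [show 0 < a ^ 2 * t ^ 2 * X by positivity]
      _ ≤ a ^ 2 * t ^ 2 * t := by gcongr
      _ = a ^ 2 * t ^ 3 := by ring
  have hlogs : 4 * (Real.log (t ^ 3) + X * Real.log a) ≤ a ^ 2 * √y := by
    have hlogt : Real.log (t ^ 3) ≤ 3 * t := by
      rw [Real.log_pow]
      exact_mod_cast mul_le_mul_of_nonneg_left (Real.log_le_self ht.le) zero_le_three
    have hloga : X * Real.log a ≤ X * a := by gcongr; exact Real.log_le_self ha0.le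
    have hat : t ≤ a * t := le_mul_of_one_le_left ht.le ha
    have ha2 : √y ≤ a ^ 2 * √y := le_mul_of_one_le_left (Real.sqrt_nonneg y) (one_le_pow₀ ha)
    nlinarith
  have hpow : y ^ (3 / 2 : ℝ) = y * √y := by
    rw [Real.sqrt_eq_rpow, ← Real.rpow_one_add' hy0.le (by norm_num)]
    norm_num
  calc 8 * t ^ 3 * (Real.log (t ^ 3) + X * Real.log a)
      = 2 * t ^ 3 * (4 * (Real.log (t ^ 3) + X * Real.log a)) := by ring
    _ ≤ 2 * t ^ 3 * (a ^ 2 * √y) := by gcongr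
    _ = 4 * X * (y * √y) := by rw [hy]; field_simp; ring
    _ = _ := by rw [hpow]

lemma log_add_mul_log_le_of_sampleSize_le (hk : 3 ≤ k) (hD : 1 ≤ D) (hℓ : 1 ≤ ℓ)
    (hn : (300 * (k * D)) ^ 3 ≤ n) (hδ : δ ≠ 0) (hm : sampleSize n k D ℓ δ ≤ m) :
    Real.log n + (k * D : ℕ) * Real.log ℓ ≤ m * δ ^ 2 / (8 * n) := by
  have hn0 : 0 < n := (by positivity : 0 < (300 * (k * D)) ^ 3).trans_le hn
  obtain ⟨t, ht0, ht⟩ : ∃ t : ℝ, 0 < t ∧ t ^ 3 = n :=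
    ⟨(n : ℝ) ^ (1 / 3 : ℝ), by positivity, by
      rw [← Real.rpow_mul_natCast n.cast_nonneg]; norm_num⟩
  have hXt : 300 * ((k : ℝ) * D) ≤ t := by
    refine le_of_pow_le_pow_left₀ three_ne_zero ht0.le ?_
    rw [ht]
    exact_mod_cast hn
  have hbase : 1 ≤ (ℓ : ℝ) ^ 2 * n / (2 * (k * D)) := by
    have hkDn : 300 * (k * D) ≤ n := (Nat.le_self_pow three_ne_zero _).trans hn
    have hnℓ : n ≤ ℓ ^ 2 * n := Nat.le_mul_of_pos_left n (by positivity)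
    rw [one_le_div (by positivity)]
    exact_mod_cast (show 2 * (k * D) ≤ ℓ ^ 2 * n by omega)
  rw [le_div_iff₀' (by positivity)]
  push_cast
  calc 8 * n * (Real.log n + k * D * Real.log ℓ)
      ≤ 4 * (k * D) * ((ℓ : ℝ) ^ 2 * n / (2 * (k * D))) ^ (3 / 2 : ℝ) := by
        rw [← ht]
        exact log_add_mul_log_le ht0 (by positivity) hXt (by exact_mod_cast hℓ)
    _ ≤ 4 * (k * D) * ((ℓ : ℝ) ^ 2 * n / (2 * (k * D))) ^ ((k : ℝ) / 2) := by
        gcongr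
        exact_mod_cast hk
    _ ≤ sampleSize n k D ℓ δ * δ ^ 2 := mul_rpow_le_sampleSize_mul_sq (by omega) hD hδ
    _ ≤ m * δ ^ 2 := by gcongr

lemma mul_exp_neg_le_inv_pow {a b x : ℝ} {N : ℕ} (ha : 0 < a) (hb : 0 < b)
    (hx : Real.log a + N * Real.log b ≤ x) : a * Real.exp (-x) ≤ (b ^ N)⁻¹ := by
  calc a * Real.exp (-x) ≤ a * Real.exp (-(Real.log a + N * Real.log b)) := by gcongr
    _ = (b ^ N)⁻¹ := by
        rw [neg_add, Real.exp_add, Real.exp_neg, Real.exp_neg, Real.exp_log ha, Real.exp_nat_mul,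
          Real.exp_log hb, mul_inv_cancel_left₀ ha.ne']

lemma eventually_cube_le_of_lt_log_div_log_log : ∀ᶠ n : ℕ in atTop, ∀ k r ℓ : ℕ, 1 ≤ r → 1 ≤ ℓ →
    ((r * k * ℓ : ℕ) : ℝ) < 0.3 * Real.log n / Real.log (Real.log n) →
    (300 * (k * (r * k))) ^ 3 ≤ n := by
  have hlog : Tendsto (fun n : ℕ => Real.log n) atTop atTop :=
    Real.tendsto_log_atTop.comp tendsto_natCast_atTop_atTop
  have hpow : ∀ᶠ n : ℕ in atTop, ‖Real.log n ^ 6‖ ≤ (300 ^ 3)⁻¹ * ‖(n : ℝ)‖ :=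
    tendsto_natCast_atTop_atTop.eventually
      (Real.isLittleO_pow_log_id_atTop.bound (by positivity))
  filter_upwards [hpow, hlog.eventually_ge_atTop 0,
    (Real.tendsto_log_atTop.comp hlog).eventually_ge_atTop 1] with n hn hlog0 hloglog k r ℓ hr hℓ hD
  have hDlog : ((r * k * ℓ : ℕ) : ℝ) ≤ Real.log n := by
    refine hD.le.trans ((div_le_self (by positivity) hloglog).trans ?_)
    linarith
  rw [Real.norm_of_nonneg (by positivity), Real.norm_of_nonneg n.cast_nonneg] at hn
  have hcube : (300 * ((r * k * ℓ : ℕ) : ℝ) ^ 2) ^ 3 ≤ n := by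
    calc (300 * ((r * k * ℓ : ℕ) : ℝ) ^ 2) ^ 3 ≤ (300 * Real.log n ^ 2) ^ 3 := by gcongr
      _ = 300 ^ 3 * Real.log n ^ 6 := by ring
      _ ≤ n := by linarith
  have hkD : k * (r * k) ≤ (r * k * ℓ) ^ 2 := by
    calc k * (r * k) ≤ k * (r * ℓ) * (r * k * ℓ) :=
          Nat.mul_le_mul (Nat.le_mul_of_pos_right k (Nat.mul_pos hr hℓ))
            (Nat.le_mul_of_pos_right _ hℓ)
      _ = (r * k * ℓ) ^ 2 := by ring
  calc (300 * (k * (r * k))) ^ 3 ≤ (300 * (r * k * ℓ) ^ 2) ^ 3 := by gcongr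
    _ ≤ n := by exact_mod_cast hcube

end SampleSize

theorem stmt17_general {n k D ℓ m : ℕ} {δ : ℝ} (hk : 3 ≤ k) (hD : 1 ≤ D) (hℓ : 1 ≤ ℓ)
    (hn : (300 * (k * D)) ^ 3 ≤ n) (hδ0 : 0 < δ) (hδ1 : δ ≤ 1) (hm : m ≤ n.choose k)
    (hsize : sampleSize n k D ℓ δ ≤ m) {x : Fin n → ℝ} (hx : IsSignVector x) :
    1 - 4 * ((ℓ : ℝ) ^ (k * D))⁻¹ ≤
      expP n k (m / n.choose k) δ x (fun z => recovers k x (corrArgmax z)) := by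
  have hkn : k < n := by
    have hkD : k ≤ k * D := Nat.le_mul_of_pos_right k hD
    have hkDn : 300 * (k * D) ≤ n := (Nat.le_self_pow three_ne_zero _).trans hn
    omega
  have hchoose : (0 : ℝ) < n.choose k := by exact_mod_cast Nat.choose_pos hkn.le
  have hp1 : (m : ℝ) / n.choose k ≤ 1 := (div_le_one hchoose).2 (by exact_mod_cast hm)
  have hmle := one_sub_le_expP_recovers_corrArgmax (by omega) hkn (by positivity) hp1 hδ0.le hδ1 hx
  rw [div_mul_cancel₀ _ hchoose.ne'] at hmle
  have hℓ1 : (1 : ℝ) ≤ ℓ := by exact_mod_cast hℓ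
  have hq : n * Real.exp (-(m * δ ^ 2 / (8 * n))) ≤ ((ℓ : ℝ) ^ (k * D))⁻¹ :=
    mul_exp_neg_le_inv_pow (by exact_mod_cast hkn.pos) (by positivity)
      (log_add_mul_log_le_of_sampleSize_le hk hD hℓ hn hδ0.ne' hsize)
  have hpow := one_add_pow_sub_one_le (Real.exp_nonneg _)
    (hq.trans (inv_le_one_of_one_le₀ (one_le_pow₀ hℓ1)))
  linarith

open Classical in
/-- Recovery theorem: there are absolute constants `r₀, C₀, c, n₀` such
that for `n ≥ n₀`, `k ≥ 3`, `r ≥ r₀`, `ℓ ≥ 2`, `D = rk`, `Dℓ < 0.3 log n / log log n`,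
`δ ∈ (0,1]` with `δ² n^{0.1} ≥ c log n`, and sample size
`binom(n,k) ≥ m ≥ (4ℓ^k k^{k/2+1}/(k! 2^{k/2}))·n^{k/2}/(δ² D^{k/2−1})` with
`p = m/binom(n,k)`, there is a randomized estimator `x̂` (a function of the observation `z`
and of internal randomness over a finite seed space, independent of `z`) whose success
probability under `P_x` is at least `1 − C₀·ℓ^{−kD}` for every planted `x ∈ {±1}^n`:
it outputs `x` exactly when `k` is odd, and one of `x, −x` when `k` is even. -/
theorem stmt17 : ∃ (r₀ : ℕ) (C₀ c : ℝ) (n₀ : ℕ), ∀ n k r ℓ : ℕ,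
    n₀ ≤ n → 3 ≤ k → r₀ ≤ r → 2 ≤ ℓ →
    ((r * k * ℓ : ℕ) : ℝ) < 0.3 * Real.log n / Real.log (Real.log n) →
    ∀ δ : ℝ, 0 < δ → δ ≤ 1 → c * Real.log n ≤ δ ^ 2 * (n : ℝ) ^ (0.1 : ℝ) →
    ∀ m : ℕ, m ≤ n.choose k →
    4 * (ℓ : ℝ) ^ k * (k : ℝ) ^ ((k : ℝ) / 2 + 1)
        / ((k.factorial : ℝ) * (2 : ℝ) ^ ((k : ℝ) / 2))
        * (n : ℝ) ^ ((k : ℝ) / 2) / (δ ^ 2 * ((r * k : ℕ) : ℝ) ^ ((k : ℝ) / 2 - 1))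
      ≤ (m : ℝ) →
    ∃ (M : ℕ) (w : Fin M → ℝ) (est : (KSet n k → ℝ) → Fin M → (Fin n → ℝ)),
      (∀ seed, 0 ≤ w seed) ∧ (∑ seed, w seed = 1) ∧
      ∀ x : Fin n → ℝ, (∀ i, x i = 1 ∨ x i = -1) →
        (Odd k →
          1 - C₀ * (((ℓ : ℝ) ^ (k * (r * k)))⁻¹)
            ≤ expP n k ((m : ℝ) / (n.choose k : ℝ)) δ x
                (fun z => ∑ seed, w seed * (if est z seed = x then 1 else 0))) ∧
        (Even k →
          1 - C₀ * (((ℓ : ℝ) ^ (k * (r * k)))⁻¹)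
            ≤ expP n k ((m : ℝ) / (n.choose k : ℝ)) δ x
                (fun z => ∑ seed, w seed *
                  (if est z seed = x ∨ est z seed = fun i => -(x i) then 1 else 0))) := by
  obtain ⟨n₀, hn₀⟩ := Filter.eventually_atTop.1 eventually_cube_le_of_lt_log_div_log_log
  refine ⟨1, 4, 0, n₀, fun n k r ℓ hn hk hr hℓ hD δ hδ0 hδ1 _ m hm hsize =>
    ⟨1, fun _ => 1, fun z _ => corrArgmax z, by simp, by simp, fun x hx => ?_⟩⟩
  have hrec := stmt17_general hk (Nat.mul_pos hr (by omega)) (by omega)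
    (hn₀ n hn k r ℓ hr (by omega) hD) hδ0 hδ1 hm hsize hx
  exact ⟨fun hodd => by simpa [recovers, Nat.not_even_iff_odd.2 hodd] using hrec,
    fun heven => by simpa [recovers, heven, Pi.neg_def] using hrec⟩
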